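/- Let n ≥ 1 and let γ_1, …, γ_n be positive integers. Set γ = ∑_{i=1}^n γ_i, let P(i) = γ_i/γ be the associated empirical probability distribution, let E(P) = −∑_{i=1}^n P(i)·ln P(i) be its entropy, and let B(γ_1, …, γ_n) = (∏_{i=1}^n (γ_i − 1)!)/(γ − 1)! be the multivariate beta function. Then there exists a real number d with (n/2)·ln(2π) − 1 ≤ d ≤ n − (1/2)·ln(2π) such that ln B(γ_1, …, γ_n) = −γ·E(P) − (1/2)·(n−1)·ln γ − (1/2)·∑_{i=1}^n ln P(i) + d. -/

import Mathlib

/-!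
For a positive integer `m`, the Stirling remainder
`c(m) = ln (m-1)! - (m ln m - m - (1/2) ln m)` lies in `[(1/2) ln (2π), 1]`: it equals
`ln (stirlingSeq m) + (1/2) ln 2`, and `stirlingSeq` decreases on the positive integers from
`e / √2` to its limit `√π`. Substituting
`ln (m-1)! = m ln m - m - (1/2) ln m + c(m)` in every factorial of the beta function, the linear
terms cancel, the rest is the entropy expression by `ln P(i) = ln γ_i - ln γ`, and
`d = ∑ c(γ_i) - c(γ)`.
-/

open Real Finset

/-- The remainder `c(m)` in Stirling's formula for `ln Γ(m) = ln (m-1)!`. -/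
noncomputable def stirlingRemainder (m : ℕ) : ℝ :=
  Real.log (Nat.factorial (m - 1) : ℝ) - ((m : ℝ) * Real.log m - m - (1 / 2) * Real.log m)

theorem stirlingRemainder_eq {m : ℕ} (hm : 0 < m) :
    stirlingRemainder m = Real.log (Stirling.stirlingSeq m) + (1 / 2) * Real.log 2 := by
  obtain ⟨k, rfl⟩ : ∃ k, m = k + 1 := ⟨m - 1, by omega⟩
  have hk : ((k + 1 : ℕ) : ℝ) ≠ 0 := by positivity
  have hf : (Nat.factorial k : ℝ) ≠ 0 := by positivity
  rw [Stirling.log_stirlingSeq_formula, stirlingRemainder, Nat.add_sub_cancel,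
    Nat.factorial_succ, Nat.cast_mul, Real.log_mul hk hf, Real.log_mul two_ne_zero hk,
    Real.log_div hk (Real.exp_pos 1).ne', Real.log_exp]
  ring

theorem le_stirlingRemainder {m : ℕ} (hm : 0 < m) :
    (1 / 2) * Real.log (2 * Real.pi) ≤ stirlingRemainder m := by
  have h := Real.log_le_log (Real.sqrt_pos.2 Real.pi_pos)
    (Stirling.sqrt_pi_le_stirlingSeq hm.ne')
  rw [Real.log_sqrt Real.pi_pos.le] at h
  rw [stirlingRemainder_eq hm, Real.log_mul two_ne_zero Real.pi_ne_zero]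
  linarith

theorem stirlingRemainder_le {m : ℕ} (hm : 0 < m) : stirlingRemainder m ≤ 1 := by
  obtain ⟨k, rfl⟩ : ∃ k, m = k + 1 := ⟨m - 1, by omega⟩
  have h : Real.log (Stirling.stirlingSeq (k + 1)) ≤ Real.log (Stirling.stirlingSeq 1) :=
    Stirling.log_stirlingSeq'_antitone (Nat.zero_le k)
  have h1 : stirlingRemainder 1 = 1 := by simp [stirlingRemainder]
  rw [stirlingRemainder_eq one_pos] at h1
  rw [stirlingRemainder_eq hm]
  linarith

/-- The entropy formula for a single multivariate beta function (Section 5.4):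
with `γ = ∑ γ_i`, empirical distribution `P(i) = γ_i / γ`, entropy
`E(P) = −∑ P(i) ln P(i)` and `B(γ_1, …, γ_n) = (∏ (γ_i − 1)!)/(γ − 1)!`, there
is a constant `d ∈ [(n/2)ln(2π) − 1, n − (1/2)ln(2π)]` with
`ln B = −γ·E(P) − (1/2)(n−1) ln γ − (1/2) ∑ ln P(i) + d`. -/
theorem log_beta_entropy_formula (n : ℕ) (hn : 1 ≤ n) (γ : Fin n → ℕ)
    (hγ : ∀ i, 0 < γ i) :
    ∃ d : ℝ,
      ((n : ℝ) / 2) * Real.log (2 * Real.pi) - 1 ≤ d ∧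
      d ≤ (n : ℝ) - (1 / 2 : ℝ) * Real.log (2 * Real.pi) ∧
      Real.log ((∏ i, (Nat.factorial (γ i - 1) : ℝ)) /
          (Nat.factorial ((∑ i, γ i) - 1) : ℝ)) =
        -((∑ i, γ i : ℕ) : ℝ) *
            (-∑ i, ((γ i : ℝ) / ((∑ k, γ k : ℕ) : ℝ)) *
              Real.log ((γ i : ℝ) / ((∑ k, γ k : ℕ) : ℝ)))
          - (1 / 2 : ℝ) * ((n : ℝ) - 1) * Real.log ((∑ i, γ i : ℕ) : ℝ)
          - (1 / 2 : ℝ) * ∑ i, Real.log ((γ i : ℝ) / ((∑ k, γ k : ℕ) : ℝ))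
          + d := by
  have hpos : 0 < ∑ i, γ i :=
    Finset.sum_pos (fun i _ => hγ i) ⟨⟨0, hn⟩, Finset.mem_univ _⟩
  have hcast : ((∑ i, γ i : ℕ) : ℝ) = ∑ i, (γ i : ℝ) := Nat.cast_sum _ _
  set s : ℕ := ∑ i, γ i with hs
  have hs0 : (s : ℝ) ≠ 0 := by positivity
  have hγ0 : ∀ i, (γ i : ℝ) ≠ 0 := fun i => Nat.cast_ne_zero.2 (hγ i).ne'
  refine ⟨∑ i, stirlingRemainder (γ i) - stirlingRemainder s, ?_, ?_, ?_⟩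
  · have h := Finset.card_nsmul_le_sum Finset.univ (fun i => stirlingRemainder (γ i)) _
      (fun i _ => le_stirlingRemainder (hγ i))
    rw [Finset.card_univ, Fintype.card_fin, nsmul_eq_mul] at h
    have h1 := stirlingRemainder_le hpos
    linarith
  · have h := Finset.sum_le_card_nsmul Finset.univ (fun i => stirlingRemainder (γ i)) _
      (fun i _ => stirlingRemainder_le (hγ i))
    rw [Finset.card_univ, Fintype.card_fin, nsmul_eq_mul] at h
    have h1 := le_stirlingRemainder hpos
    linarith
  · have hlog : ∀ i, Real.log ((γ i : ℝ) / s) = Real.log (γ i) - Real.log s :=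
      fun i => Real.log_div (hγ0 i) hs0
    have hent : (s : ℝ) * ∑ i, ((γ i : ℝ) / s) * (Real.log (γ i) - Real.log s) =
        ∑ i, (γ i : ℝ) * Real.log (γ i) - s * Real.log s := by
      rw [Finset.mul_sum]
      nth_rewrite 4 [hcast]
      rw [Finset.sum_mul, ← Finset.sum_sub_distrib]
      refine Finset.sum_congr rfl fun i _ => ?_
      field_simp
    rw [Real.log_div (Finset.prod_ne_zero_iff.2 fun i _ => by positivity) (by positivity),
      Real.log_prod (fun i _ => by positivity)]
    simp only [hlog, neg_mul_neg, hent]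
    simp only [stirlingRemainder, Finset.sum_sub_distrib, ← Finset.mul_sum, ← hcast,
      Finset.sum_const, Finset.card_univ, Fintype.card_fin, nsmul_eq_mul]
    ring
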